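/- Assume W is strongly connected, θ_j > 0 for at least one agent j, θ_i < 1 for every i, and ω ∈ (0,1). Fix a budget K with 1 ≤ K ≤ n, and let S₀ = ∅ and, for k = 1,…,K, S_k = S_{k−1} ∪ {i_k}, where i_k ∈ V is any agent maximizing sp₀(S_{k−1} ∪ {i}) over all i ∈ V (a greedy choice). Then the greedy output S_K satisfies sp₀(S_K) ≥ (1 − 1/e) · max{ sp₀(S) : S ⊆ V, |S| ≤ K }, where e is Euler's number. -/

import Mathlib

open Matrix Finset

/-- `H(S) = (I - ω Σ_{j∈S} e_j e_jᵀ) (I - Θ) W`. -/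
noncomputable def Hmat {n : ℕ} (W : Matrix (Fin n) (Fin n) ℝ) (θ : Fin n → ℝ) (ω : ℝ)
    (S : Finset (Fin n)) : Matrix (Fin n) (Fin n) ℝ :=
  (1 - Matrix.diagonal (fun i => if i ∈ S then ω else 0)) *
    ((1 - Matrix.diagonal θ) * W)

/-- `p₀(S) = (I - H(S))⁻¹ (I - Θ) ω Σ_{j∈S} e_j`. -/
noncomputable def p0vec {n : ℕ} (W : Matrix (Fin n) (Fin n) ℝ) (θ : Fin n → ℝ) (ω : ℝ)
    (S : Finset (Fin n)) : Fin n → ℝ :=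
  ((1 - Hmat W θ ω S)⁻¹ * (1 - Matrix.diagonal θ)).mulVec
    (fun j => if j ∈ S then ω else 0)

/-- The influencer's social power `sp₀(S) = (𝟙ᵀ p₀(S) + 1)/(n+1)`. -/
noncomputable def sp0 {n : ℕ} (W : Matrix (Fin n) (Fin n) ℝ) (θ : Fin n → ℝ) (ω : ℝ)
    (S : Finset (Fin n)) : ℝ :=
  ((∑ i, p0vec W θ ω S i) + 1) / (n + 1)

/-!
`p₀(S)` is the fixed point of `p = c * (s + (1 - s) * (W *ᵥ p))`, where `c = 1 - θ` and `s` is `ω`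
on `S` and `0` elsewhere. Since every agent can reach one with `c < 1`, the discounted averaging
operator satisfies a maximum principle: `u ≤ (1 - s) * c * (W *ᵥ u)` forces `u ≤ 0`. Applied to
first and second differences of fixed points, it shows that `p₀` is increasing and has diminishing
returns in `s`, hence in `S`. The greedy bound of Nemhauser, Wolsey and Fisher for monotone
submodular functions then applies to `sp₀`.
-/

section Greedy

variable {α : Type*} [DecidableEq α]

/-- The marginal value of every element decreases as the set grows, which for functions of finite
sets is equivalent to submodularity. -/
def HasDiminishingReturns {β : Type*} [Sub β] [LE β] (f : Finset α → β) : Prop :=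
  ∀ ⦃A B : Finset α⦄, A ⊆ B → ∀ a ∉ B, f (insert a B) - f B ≤ f (insert a A) - f A

/-- The sets `S 0, …, S m` are produced by `m` steps of the greedy algorithm maximizing `f`;
nothing is required of the later terms of `S`. -/
structure IsGreedySequence (f : Finset α → ℝ) (S : ℕ → Finset α) (m : ℕ) : Prop where
  zero : S 0 = ∅
  succ : ∀ k < m, ∃ i, S (k + 1) = insert i (S k) ∧ ∀ j, f (insert j (S k)) ≤ f (insert i (S k))

variable {f : Finset α → ℝ} {S : ℕ → Finset α} {T : Finset α} {k m K : ℕ}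

theorem HasDiminishingReturns.union_sub_le_sum (hf : HasDiminishingReturns f) (A T : Finset α) :
    f (T ∪ A) - f A ≤ ∑ a ∈ T, (f (insert a A) - f A) := by
  induction T using Finset.induction_on with
  | empty => simp
  | insert a T ha ih =>
    rw [insert_union, sum_insert ha]
    have hmarginal : f (insert a (T ∪ A)) - f (T ∪ A) ≤ f (insert a A) - f A := by
      by_cases haA : a ∈ A
      · simp [insert_eq_of_mem haA, insert_eq_of_mem (mem_union_right T haA)]
      · exact hf subset_union_right a (by simp [ha, haA])
    linarith

namespace IsGreedySequence

theorem le_succ (hS : IsGreedySequence f S m) (hmono : Monotone f) (hk : k < m) :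
    f (S k) ≤ f (S (k + 1)) := by
  obtain ⟨i, hi, -⟩ := hS.succ k hk
  exact hi ▸ hmono (subset_insert i (S k))

theorem insert_le_succ (hS : IsGreedySequence f S m) (hk : k < m) (j : α) :
    f (insert j (S k)) ≤ f (S (k + 1)) := by
  obtain ⟨i, hi, hmax⟩ := hS.succ k hk
  exact hi ▸ hmax j

theorem gap_le_mul_gain (hS : IsGreedySequence f S m) (hmono : Monotone f)
    (hf : HasDiminishingReturns f) (hT : T.card ≤ K) (hk : k < m) :
    f T - f (S k) ≤ K * (f (S (k + 1)) - f (S k)) :=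
  calc f T - f (S k)
      ≤ f (T ∪ S k) - f (S k) := by gcongr; exact hmono subset_union_left
    _ ≤ ∑ a ∈ T, (f (insert a (S k)) - f (S k)) := hf.union_sub_le_sum _ _
    _ ≤ ∑ _a ∈ T, (f (S (k + 1)) - f (S k)) := by gcongr; exact hS.insert_le_succ hk _
    _ = T.card * (f (S (k + 1)) - f (S k)) := by rw [sum_const, nsmul_eq_mul]
    _ ≤ K * (f (S (k + 1)) - f (S k)) := by
      have := sub_nonneg.2 (hS.le_succ hmono hk)
      gcongr

theorem gap_succ_le (hS : IsGreedySequence f S m) (hmono : Monotone f)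
    (hf : HasDiminishingReturns f) (hK : 0 < K) (hT : T.card ≤ K) (hk : k < m) :
    f T - f (S (k + 1)) ≤ (1 - 1 / (K : ℝ)) * (f T - f (S k)) := by
  have hgain : (f T - f (S k)) / K ≤ f (S (k + 1)) - f (S k) := by
    rw [div_le_iff₀' (by positivity)]
    exact hS.gap_le_mul_gain hmono hf hT hk
  linear_combination hgain

theorem gap_le_pow_mul (hS : IsGreedySequence f S m) (hmono : Monotone f)
    (hf : HasDiminishingReturns f) (hK : 0 < K) (hT : T.card ≤ K) (hk : k ≤ m) :
    f T - f (S k) ≤ (1 - 1 / (K : ℝ)) ^ k * (f T - f ∅) := by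
  induction k with
  | zero => simp [hS.zero]
  | succ k ih =>
    have hcontraction : 0 ≤ 1 - 1 / (K : ℝ) := by
      simpa using Nat.cast_inv_le_one (α := ℝ) K
    calc f T - f (S (k + 1))
        ≤ (1 - 1 / (K : ℝ)) * (f T - f (S k)) := hS.gap_succ_le hmono hf hK hT hk
      _ ≤ (1 - 1 / (K : ℝ)) * ((1 - 1 / (K : ℝ)) ^ k * (f T - f ∅)) := by
        gcongr
        exact ih (Nat.le_of_succ_le hk)
      _ = (1 - 1 / (K : ℝ)) ^ (k + 1) * (f T - f ∅) := by ring

theorem one_sub_exp_mul_le (hS : IsGreedySequence f S m) (hmono : Monotone f)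
    (hf : HasDiminishingReturns f) (hempty : 0 ≤ f ∅) (hK : 0 < K) (hT : T.card ≤ K) :
    (1 - Real.exp (-(m / K))) * f T ≤ f (S m) := by
  have hpow : (1 - 1 / (K : ℝ)) ^ m ≤ Real.exp (-(m / K)) :=
    calc (1 - 1 / (K : ℝ)) ^ m
        ≤ Real.exp (-(1 / K)) ^ m := by
          gcongr
          · simpa using Nat.cast_inv_le_one (α := ℝ) K
          · exact Real.one_sub_le_exp_neg _
      _ = Real.exp (-(m / K)) := by rw [← Real.exp_nat_mul]; ring_nf
  have hgap : f T - f (S m) ≤ Real.exp (-(m / K)) * (f T - f ∅) :=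
    (hS.gap_le_pow_mul hmono hf hK hT le_rfl).trans <|
      mul_le_mul_of_nonneg_right hpow (sub_nonneg.2 (hmono (empty_subset T)))
  have : 0 ≤ Real.exp (-(m / K)) * f ∅ := by positivity
  linarith

end IsGreedySequence

end Greedy

section Dynamics

variable {ι : Type*} [Fintype ι] {W : Matrix ι ι ℝ} {c d s t e u : ι → ℝ}

theorem mulVec_le_mulVec_of_nonneg {v : ι → ℝ} (hW : ∀ i j, 0 ≤ W i j) (huv : u ≤ v) :
    W *ᵥ u ≤ W *ᵥ v :=
  fun i => dotProduct_le_dotProduct_of_nonneg_left huv (hW i)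

theorem mulVec_apply_le_of_row_sum_le_one {M : ℝ} {i : ι} (hW : ∀ j, 0 ≤ W i j)
    (hsum : ∑ j, W i j ≤ 1) (hM : 0 ≤ M) (hu : ∀ j, u j ≤ M) : (W *ᵥ u) i ≤ M :=
  calc (W *ᵥ u) i
      ≤ ∑ j, W i j * M := sum_le_sum fun j _ => mul_le_mul_of_nonneg_left (hu j) (hW j)
    _ = (∑ j, W i j) * M := (sum_mul ..).symm
    _ ≤ M := mul_le_of_le_one_left hM hsum

theorem eq_of_le_mulVec_apply {M : ℝ} {i j : ι} (hW : ∀ j, 0 ≤ W i j)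
    (hsum : ∑ j, W i j ≤ 1) (hM : 0 ≤ M) (hu : ∀ j, u j ≤ M) (hMi : M ≤ (W *ᵥ u) i)
    (hij : 0 < W i j) : u j = M := by
  have hnonneg : ∀ l ∈ univ, 0 ≤ W i l * (M - u l) :=
    fun l _ => mul_nonneg (hW l) (sub_nonneg.2 (hu l))
  have hle : ∑ l, W i l * (M - u l) ≤ 0 :=
    calc ∑ l, W i l * (M - u l)
        = (∑ l, W i l) * M - (W *ᵥ u) i := by
          simp only [mul_sub, sum_sub_distrib, sum_mul, mulVec, dotProduct]
      _ ≤ 0 := sub_nonpos.2 ((mul_le_of_le_one_left hM hsum).trans hMi)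
  have hzero := (sum_eq_zero_iff_of_nonneg hnonneg).1 (hle.antisymm (sum_nonneg hnonneg)) j
    (mem_univ j)
  linarith [(mul_eq_zero.1 hzero).resolve_left hij.ne']

/-- `p` is the stationary influence profile when agent `i` is linked to the influencer with weight
`s i`, averages its neighbours by `W` with the remaining weight, and discounts the outcome by its
susceptibility `c i = 1 - θ i`. -/
def IsEquilibrium (W : Matrix ι ι ℝ) (c s p : ι → ℝ) : Prop :=
  p = c * (s + (1 - s) * (W *ᵥ p))

theorem IsEquilibrium.apply_eq {p : ι → ℝ} (hp : IsEquilibrium W c s p) (i : ι) :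
    p i = c i * (s i + (1 - s i) * (W *ᵥ p) i) :=
  congrFun hp i

variable [DecidableEq ι]

theorem of_pow_apply_pos {P : ι → Prop} (hW : ∀ i j, 0 ≤ W i j)
    (hstep : ∀ i j, P i → 0 < W i j → P j) {i j : ι} {k : ℕ} (hi : P i)
    (hk : 0 < (W ^ k) i j) : P j := by
  let := W.toQuiver
  obtain ⟨path, -⟩ := (pow_apply_pos_iff_nonempty_path hW k i j).1 hk
  clear hk
  induction path with
  | nil => exact hi
  | cons _ edge ih => exact hstep _ _ ih edge.down

/-- The substochastic chain that moves by `W` and survives at `i` with probability `c i` can reach,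
from every state, one where it is killed with positive probability. Reachability is by edges of
`W`, including those out of states with `c i = 0`. -/
structure IsAbsorbingChain (W : Matrix ι ι ℝ) (c : ι → ℝ) : Prop where
  nonneg : ∀ i j, 0 ≤ W i j
  row_sum_le_one : ∀ i, ∑ j, W i j ≤ 1
  survival_nonneg : 0 ≤ c
  survival_le_one : c ≤ 1
  exists_pow_pos : ∀ i, ∃ j, c j < 1 ∧ ∃ k, 0 < (W ^ k) i j

namespace IsAbsorbingChain

theorem anti (h : IsAbsorbingChain W c) (hd : 0 ≤ d) (hdc : d ≤ c) : IsAbsorbingChain W d where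
  nonneg := h.nonneg
  row_sum_le_one := h.row_sum_le_one
  survival_nonneg := hd
  survival_le_one := hdc.trans h.survival_le_one
  exists_pow_pos i :=
    let ⟨j, hj, hij⟩ := h.exists_pow_pos i
    ⟨j, (hdc j).trans_lt hj, hij⟩

theorem one_sub_mul (h : IsAbsorbingChain W c) (hs : 0 ≤ s) (hs1 : s ≤ 1) :
    IsAbsorbingChain W ((1 - s) * c) :=
  h.anti (mul_nonneg (sub_nonneg.2 hs1) h.survival_nonneg)
    (mul_le_of_le_one_left h.survival_nonneg (sub_le_self 1 hs))

-- A positive maximum of `u` propagates along the edges of `W` to a state with `c j < 1`, where it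
-- cannot be attained.
theorem nonpos_of_le_mul_mulVec (h : IsAbsorbingChain W c) (hu : u ≤ c * (W *ᵥ u)) : u ≤ 0 := by
  intro i
  by_contra! hi
  obtain ⟨m, -, hmax⟩ := exists_max_image univ u ⟨i, mem_univ i⟩
  replace hmax : ∀ j, u j ≤ u m := fun j => hmax j (mem_univ j)
  have hpos : 0 < u m := hi.trans_le (hmax i)
  have havg : ∀ l, (W *ᵥ u) l ≤ u m := fun l =>
    mulVec_apply_le_of_row_sum_le_one (h.nonneg l) (h.row_sum_le_one l) hpos.le hmax
  have hle : ∀ l, u l ≤ c l * (W *ᵥ u) l := hu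
  have hstep : ∀ l j, u l = u m → 0 < W l j → u j = u m := by
    intro l j hl hlj
    have havg_pos : 0 < (W *ᵥ u) l :=
      pos_of_mul_pos_right (hpos.trans_le (hl ▸ hle l)) (h.survival_nonneg l)
    refine eq_of_le_mulVec_apply (h.nonneg l) (h.row_sum_le_one l) hpos.le hmax ?_ hlj
    exact (hl ▸ hle l).trans (mul_le_of_le_one_left havg_pos.le (h.survival_le_one l))
  obtain ⟨j, hcj, k, hk⟩ := h.exists_pow_pos m
  have hj : u j = u m := of_pow_apply_pos (P := fun l => u l = u m) h.nonneg hstep rfl hk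
  have : u m < u m :=
    calc u m ≤ c j * (W *ᵥ u) j := hj ▸ hle j
      _ ≤ c j * u m := mul_le_mul_of_nonneg_left (havg j) (h.survival_nonneg j)
      _ < u m := mul_lt_of_lt_one_left hpos hcj
  exact this.false

theorem isUnit_one_sub (h : IsAbsorbingChain W c) : IsUnit (1 - diagonal c * W) := by
  rw [← mulVec_injective_iff_isUnit]
  have hle : ∀ x y, (1 - diagonal c * W) *ᵥ x = (1 - diagonal c * W) *ᵥ y → x ≤ y := by
    intro x y hxy
    refine sub_nonpos.1 (h.nonpos_of_le_mul_mulVec fun i => le_of_eq ?_)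
    have := congrFun hxy i
    simp only [sub_mulVec, one_mulVec, ← mulVec_mulVec, mulVec_diagonal, Pi.sub_apply] at this
    simp only [mulVec_sub, Pi.sub_apply, Pi.mul_apply]
    linarith
  exact fun x y hxy => (hle x y hxy).antisymm (hle y x hxy.symm)

end IsAbsorbingChain

namespace IsEquilibrium

variable {p q : ι → ℝ}

theorem le_one (h : IsAbsorbingChain W c) (hs : 0 ≤ s) (hs1 : s ≤ 1)
    (hp : IsEquilibrium W c s p) : p ≤ 1 := by
  refine sub_nonpos.1 ((h.one_sub_mul hs hs1).nonpos_of_le_mul_mulVec fun i => ?_)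
  have hone : (W *ᵥ 1) i ≤ 1 :=
    mulVec_apply_le_of_row_sum_le_one (h.nonneg i) (h.row_sum_le_one i) zero_le_one fun _ => le_rfl
  have hgap : 0 ≤ (1 - s i) * c i * (1 - (W *ᵥ 1) i) :=
    mul_nonneg ((h.one_sub_mul hs hs1).survival_nonneg i) (sub_nonneg.2 hone)
  have hci : c i ≤ 1 := h.survival_le_one i
  simp only [mulVec_sub, Pi.sub_apply, Pi.mul_apply, Pi.one_apply]
  linear_combination hp.apply_eq i + hgap + hci

theorem mulVec_le_one (h : IsAbsorbingChain W c) (hs : 0 ≤ s) (hs1 : s ≤ 1)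
    (hp : IsEquilibrium W c s p) : W *ᵥ p ≤ 1 := fun i =>
  mulVec_apply_le_of_row_sum_le_one (h.nonneg i) (h.row_sum_le_one i) zero_le_one
    (hp.le_one h hs hs1)

theorem mono (h : IsAbsorbingChain W c) (hs : 0 ≤ s) (hst : s ≤ t) (ht1 : t ≤ 1)
    (hp : IsEquilibrium W c s p) (hq : IsEquilibrium W c t q) : p ≤ q := by
  refine sub_nonpos.1 ((h.one_sub_mul (hs.trans hst) ht1).nonpos_of_le_mul_mulVec fun i => ?_)
  have hgap : 0 ≤ c i * ((t i - s i) * (1 - (W *ᵥ p) i)) :=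
    mul_nonneg (h.survival_nonneg i) <| mul_nonneg (sub_nonneg.2 (hst i)) <|
      sub_nonneg.2 (hp.mulVec_le_one h hs (hst.trans ht1) i)
  simp only [mulVec_sub, Pi.sub_apply, Pi.mul_apply, Pi.one_apply]
  linear_combination hp.apply_eq i - hq.apply_eq i + hgap

theorem sub_le_sub_of_le (h : IsAbsorbingChain W c) (hs : 0 ≤ s) (hst : s ≤ t) (he : 0 ≤ e)
    (hte : t + e ≤ 1) {p' q' : ι → ℝ} (hp : IsEquilibrium W c s p) (hq : IsEquilibrium W c t q)
    (hp' : IsEquilibrium W c (s + e) p') (hq' : IsEquilibrium W c (t + e) q') :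
    q' - q ≤ p' - p := by
  have ht : 0 ≤ t := hs.trans hst
  have ht1 : t ≤ 1 := (le_add_of_nonneg_right he).trans hte
  refine sub_nonpos.1 ((h.one_sub_mul hs (hst.trans ht1)).nonpos_of_le_mul_mulVec fun i => ?_)
  have hqq' : (W *ᵥ q) i ≤ (W *ᵥ q') i :=
    mulVec_le_mulVec_of_nonneg h.nonneg (hq.mono h ht (le_add_of_nonneg_right he) hte hq') i
  have hpq' : (W *ᵥ p') i ≤ (W *ᵥ q') i :=
    mulVec_le_mulVec_of_nonneg h.nonneg
      (hp'.mono h (add_nonneg hs he) (add_le_add_left hst e) hte hq') i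
  have hgap : 0 ≤ c i * ((t i - s i) * ((W *ᵥ q') i - (W *ᵥ q) i)
      + e i * ((W *ᵥ q') i - (W *ᵥ p') i)) :=
    mul_nonneg (h.survival_nonneg i) <| add_nonneg
      (mul_nonneg (sub_nonneg.2 (hst i)) (sub_nonneg.2 hqq'))
      (mul_nonneg (he i) (sub_nonneg.2 hpq'))
  have hp'i := hp'.apply_eq i
  have hq'i := hq'.apply_eq i
  simp only [Pi.add_apply] at hp'i hq'i
  simp only [mulVec_sub, Pi.sub_apply, Pi.mul_apply, Pi.one_apply]
  linear_combination hq'i - hq.apply_eq i - hp'i + hp.apply_eq i + hgap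

end IsEquilibrium

end Dynamics

section LinkWeight

variable {ι : Type*} [DecidableEq ι] {ω : ℝ} {S T : Finset ι}

/-- The vector `ω Σ_{j∈S} e_j` of influencer link weights. -/
def linkWeight (ω : ℝ) (S : Finset ι) : ι → ℝ := fun i => if i ∈ S then ω else 0

theorem linkWeight_nonneg (hω : 0 ≤ ω) : 0 ≤ linkWeight ω S := by
  intro i
  unfold linkWeight
  split_ifs <;> simp [hω]

theorem linkWeight_le_one (hω : ω ≤ 1) : linkWeight ω S ≤ 1 := by
  intro i
  unfold linkWeight
  split_ifs <;> simp [hω]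

theorem linkWeight_mono (hω : 0 ≤ ω) (hST : S ⊆ T) : linkWeight ω S ≤ linkWeight ω T := by
  intro i
  unfold linkWeight
  split_ifs with hS hT
  exacts [le_rfl, absurd (hST hS) hT, hω, le_rfl]

theorem linkWeight_insert {a : ι} (ha : a ∉ S) :
    linkWeight ω (insert a S) = linkWeight ω S + Pi.single a ω := by
  ext i
  by_cases hi : i = a
  · subst hi
    simp [linkWeight, ha]
  · simp [linkWeight, hi]

end LinkWeight

section SocialPower

variable {n : ℕ} {W : Matrix (Fin n) (Fin n) ℝ} {θ : Fin n → ℝ} {ω : ℝ}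

theorem Hmat_eq_diagonal_mul (S : Finset (Fin n)) :
    Hmat W θ ω S = diagonal ((1 - linkWeight ω S) * (1 - θ)) * W := by
  have hdiag : ∀ v : Fin n → ℝ, 1 - diagonal v = diagonal (1 - v) := fun v => by
    rw [← diagonal_one, diagonal_sub]
    rfl
  rw [Hmat, ← Matrix.mul_assoc, hdiag, hdiag, diagonal_mul_diagonal]
  rfl

theorem p0vec_isEquilibrium (h : IsAbsorbingChain W (1 - θ)) (hω : ω ∈ Set.Icc (0 : ℝ) 1)
    (S : Finset (Fin n)) : IsEquilibrium W (1 - θ) (linkWeight ω S) (p0vec W θ ω S) := by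
  have hunit : IsUnit (1 - Hmat W θ ω S).det := by
    rw [← isUnit_iff_isUnit_det, Hmat_eq_diagonal_mul]
    exact (h.one_sub_mul (linkWeight_nonneg hω.1) (linkWeight_le_one hω.2)).isUnit_one_sub
  have hsolve : (1 - Hmat W θ ω S) *ᵥ p0vec W θ ω S = (1 - diagonal θ) *ᵥ linkWeight ω S := by
    rw [p0vec, mulVec_mulVec, mul_nonsing_inv_cancel_left _ _ hunit]
    rfl
  funext i
  have := congrFun hsolve i
  simp only [Hmat_eq_diagonal_mul, sub_mulVec, one_mulVec, ← mulVec_mulVec, mulVec_diagonal,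
    Pi.sub_apply, Pi.mul_apply, Pi.one_apply] at this
  simp only [Pi.sub_apply, Pi.mul_apply, Pi.add_apply, Pi.one_apply]
  linear_combination this

theorem p0vec_mono (h : IsAbsorbingChain W (1 - θ)) (hω : ω ∈ Set.Icc (0 : ℝ) 1) :
    Monotone (p0vec W θ ω) := fun S T hST =>
  (p0vec_isEquilibrium h hω S).mono h (linkWeight_nonneg hω.1) (linkWeight_mono hω.1 hST)
    (linkWeight_le_one hω.2) (p0vec_isEquilibrium h hω T)

theorem p0vec_hasDiminishingReturns (h : IsAbsorbingChain W (1 - θ))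
    (hω : ω ∈ Set.Icc (0 : ℝ) 1) : HasDiminishingReturns (p0vec W θ ω) := by
  intro A B hAB a haB
  have hinsert (C : Finset (Fin n)) (haC : a ∉ C) :
      IsEquilibrium W (1 - θ) (linkWeight ω C + Pi.single a ω) (p0vec W θ ω (insert a C)) :=
    linkWeight_insert (ω := ω) haC ▸ p0vec_isEquilibrium h hω (insert a C)
  exact (p0vec_isEquilibrium h hω A).sub_le_sub_of_le h (linkWeight_nonneg hω.1)
    (linkWeight_mono hω.1 hAB) (Pi.single_nonneg.2 hω.1)
    (linkWeight_insert (ω := ω) haB ▸ linkWeight_le_one hω.2)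
    (p0vec_isEquilibrium h hω B) (hinsert A (notMem_mono hAB haB)) (hinsert B haB)

theorem sp0_mono (h : IsAbsorbingChain W (1 - θ)) (hω : ω ∈ Set.Icc (0 : ℝ) 1) :
    Monotone (sp0 W θ ω) := by
  intro S T hST
  unfold sp0
  gcongr
  exact p0vec_mono h hω hST _

theorem sp0_hasDiminishingReturns (h : IsAbsorbingChain W (1 - θ))
    (hω : ω ∈ Set.Icc (0 : ℝ) 1) : HasDiminishingReturns (sp0 W θ ω) := by
  intro A B hAB a ha
  have hsum := sum_le_sum fun i (_ : i ∈ univ) => p0vec_hasDiminishingReturns h hω hAB a ha i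
  simp only [Pi.sub_apply, sum_sub_distrib] at hsum
  simp only [sp0, ← sub_div, add_sub_add_right_eq_sub]
  gcongr

theorem sp0_empty : sp0 W θ ω ∅ = 1 / (n + 1) := by
  have : p0vec W θ ω ∅ = 0 := by
    simp only [p0vec, notMem_empty, if_false]
    exact mulVec_zero _
  simp [sp0, this]

end SocialPower

theorem greedy_approximation_general {n : ℕ} {W : Matrix (Fin n) (Fin n) ℝ}
    (hW : ∀ i j, 0 ≤ W i j) (hsum : ∀ i, ∑ j, W i j ≤ 1) {θ : Fin n → ℝ}
    (hθ : ∀ i, θ i ∈ Set.Icc (0 : ℝ) 1) (hreach : ∀ i, ∃ j, 0 < θ j ∧ ∃ k, 0 < (W ^ k) i j)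
    {ω : ℝ} (hω : ω ∈ Set.Icc (0 : ℝ) 1) {Ssel : ℕ → Finset (Fin n)} {m : ℕ}
    (hgreedy : IsGreedySequence (sp0 W θ ω) Ssel m) {K : ℕ} (hK : 0 < K) {S : Finset (Fin n)}
    (hS : S.card ≤ K) :
    (1 - Real.exp (-(m / K))) * sp0 W θ ω S ≤ sp0 W θ ω (Ssel m) := by
  have h : IsAbsorbingChain W (1 - θ) :=
    { nonneg := hW
      row_sum_le_one := hsum
      survival_nonneg := fun i => sub_nonneg.2 (hθ i).2
      survival_le_one := fun i => sub_le_self 1 (hθ i).1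
      exists_pow_pos := fun i =>
        let ⟨j, hj, hij⟩ := hreach i
        ⟨j, sub_lt_self 1 hj, hij⟩ }
  have hempty : 0 ≤ sp0 W θ ω ∅ := by rw [sp0_empty]; positivity
  exact hgreedy.one_sub_exp_mul_le (sp0_mono h hω) (sp0_hasDiminishingReturns h hω) hempty hK hS

/-- The greedy algorithm achieves a `(1 - 1/e)` approximation of the optimal social power. -/
theorem greedy_approximation
    (n : ℕ) (hn : 1 ≤ n) (W : Matrix (Fin n) (Fin n) ℝ)
    (hW0 : ∀ i j, 0 ≤ W i j) (hW1 : ∀ i, ∑ j, W i j = 1)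
    (hconn : ∀ i j : Fin n, ∃ k, 1 ≤ k ∧ 0 < (W ^ k) i j)
    (θ : Fin n → ℝ) (hθ : ∀ i, θ i ∈ Set.Icc (0 : ℝ) 1) (hθpos : ∃ j, 0 < θ j)
    (hθlt : ∀ i, θ i < 1)
    (ω : ℝ) (hω : ω ∈ Set.Ioo (0 : ℝ) 1)
    (K : ℕ) (hK : 1 ≤ K) (hKn : K ≤ n)
    (Ssel : ℕ → Finset (Fin n)) (h0 : Ssel 0 = ∅)
    (hgreedy : ∀ k < K, ∃ i : Fin n,
      Ssel (k + 1) = insert i (Ssel k) ∧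
      ∀ j : Fin n, sp0 W θ ω (insert j (Ssel k)) ≤ sp0 W θ ω (insert i (Ssel k))) :
    ∀ S : Finset (Fin n), S.card ≤ K →
      (1 - 1 / Real.exp 1) * sp0 W θ ω S ≤ sp0 W θ ω (Ssel K) := by
  intro S hS
  have hreach : ∀ i, ∃ j, 0 < θ j ∧ ∃ k, 0 < (W ^ k) i j := fun i =>
    hθpos.imp fun j hj => ⟨hj, (hconn i j).imp fun _ hk => hk.2⟩
  have := greedy_approximation_general hW0 (fun i => (hW1 i).le) hθ hreach
    (Set.Ioo_subset_Icc_self hω) ⟨h0, hgreedy⟩ hK hS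
  rwa [div_self (Nat.cast_ne_zero.2 (Nat.one_le_iff_ne_zero.1 hK)), Real.exp_neg, ← one_div] at this
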